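/- Tensor injectivity lemma: Let V_j ⊂ R^{N_j} (j = 1,…,d) be subspaces all of whose nonzero vectors are s-sparse, and let U_j ∈ R^{m_j×N_j} satisfy NSP_s. If 𝒲 ∈ V_1 ∘ V_2 ∘ … ∘ V_d (i.e., the column space of each mode-j unfolding of 𝒲 is contained in V_j) and 𝒲 ×_1 U_1 ×_2 U_2 ⋯ ×_d U_d = 0, then 𝒲 = 0. -/

import Mathlib

/-- A vector is `s`-sparse if it has at most `s` nonzero entries. -/
def SparseVec {n : ℕ} (s : ℕ) (x : Fin n → ℝ) : Prop :=
  (Finset.univ.filter fun i => x i ≠ 0).card ≤ s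

/-- The null space property of order `s`. -/
def NSP {m n : ℕ} (s : ℕ) (A : Matrix (Fin m) (Fin n) ℝ) : Prop :=
  ∀ w : Fin n → ℝ, A.mulVec w = 0 → w ≠ 0 →
    ∀ S : Finset (Fin n), S.card = s →
      ∑ i ∈ S, |w i| < ∑ i ∈ Sᶜ, |w i|

/-- The multi-mode product `X ×₁ U 1 ×₂ U 2 ⋯ ×_d U d` of a tensor with matrices
`U j` applied on every mode. -/
def modeProdAll {d : ℕ} {N M : Fin d → ℕ}
    (U : ∀ j, Matrix (Fin (M j)) (Fin (N j)) ℝ) (X : (∀ j, Fin (N j)) → ℝ) :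
    (∀ j, Fin (M j)) → ℝ :=
  fun k => ∑ g : ∀ j, Fin (N j), (∏ j, U j (k j) (g j)) * X g

/-!
Split off the first mode. For each multi-index `k` of the remaining modes, the vector
`a ↦ (X (a, ·) ×₁ U 2 ⋯ ×_{d-1} U d) k` is a linear combination of mode-`1` fibers of `X`, hence
lies in `V 1`, and `U 1` annihilates it; since `U 1` has trivial kernel on `V 1`, it vanishes. So
every slice `X (a, ·)` is killed by the remaining `d - 1` matrices, and induction on `d` applies.
The null space property enters only through the triviality of the kernel of `U j` on `V j`: if
`w ≠ 0` is a kernel vector supported in `S`, then the sum of `|w i|` over `Sᶜ` is `0`, which cannot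
exceed the sum over `S`.
-/

section ModeProduct

open Matrix

variable {R : Type*} {d : ℕ}

section Fibers

variable [Semiring R]

/-- Membership in the tensor space `V 1 ∘ ⋯ ∘ V d`: all mode-`j` fibers of `X`, i.e. the columns of
its mode-`j` unfolding, lie in `V j`. -/
def HasFibersIn {n : Fin d → Type*} (V : ∀ j, Submodule R (n j → R)) (X : (∀ j, n j) → R) : Prop :=
  ∀ j, ∀ g : ∀ l, n l, (fun a => X (Function.update g j a)) ∈ V j

variable {n : Fin (d + 1) → Type*} {V : ∀ j, Submodule R (n j → R)} {X : (∀ j, n j) → R}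

theorem HasFibersIn.cons_left_mem (hX : HasFibersIn V X) (g : ∀ j : Fin d, n j.succ) :
    (fun a => X (Fin.cons a g)) ∈ V 0 := by
  rcases isEmpty_or_nonempty (n 0) with _ | ⟨⟨a⟩⟩
  · simp [Subsingleton.elim (fun a => X (Fin.cons a g)) 0]
  · simpa only [Fin.update_cons_zero] using hX 0 (Fin.cons a g)

theorem HasFibersIn.slice (hX : HasFibersIn V X) (a : n 0) :
    HasFibersIn (fun j => V j.succ) (fun g => X (Fin.cons a g)) := fun j g => by
  simpa only [Fin.cons_update] using hX j.succ (Fin.cons a g)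

end Fibers

variable [CommSemiring R]

/-- The multi-mode product of `modeProdAll`, for tensors over a commutative semiring; the modes are
indexed by arbitrary types, finite where they are summed over. -/
def modeProd {n m : Fin d → Type*} [∀ j, Fintype (n j)]
    (U : ∀ j, Matrix (m j) (n j) R) (X : (∀ j, n j) → R) : (∀ j, m j) → R :=
  fun k => ∑ g : ∀ j, n j, (∏ j, U j (k j) (g j)) * X g

theorem modeProd_fin_zero {n m : Fin 0 → Type*} [∀ j, Fintype (n j)]
    (U : ∀ j, Matrix (m j) (n j) R) (X : (∀ j, n j) → R) (k : ∀ j, m j) (g : ∀ j, n j) :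
    modeProd U X k = X g := by
  simp [modeProd, Subsingleton.elim default g]

theorem modeProd_cons {n m : Fin (d + 1) → Type*} [∀ j, Fintype (n j)]
    (U : ∀ j, Matrix (m j) (n j) R) (X : (∀ j, n j) → R) (i : m 0) (k : ∀ j : Fin d, m j.succ) :
    modeProd U X (Fin.cons i k) =
      (U 0 *ᵥ fun a => modeProd (fun j => U j.succ) (fun g => X (Fin.cons a g)) k) i := by
  simp only [modeProd, mulVec, dotProduct, Finset.mul_sum]
  rw [← (Fin.consEquiv n).sum_comp, Fintype.sum_prod_type]
  simp [Fin.prod_univ_succ, Fin.consEquiv, mul_assoc]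

theorem HasFibersIn.modeProd_slice_mem {n : Fin (d + 1) → Type*} {m : Fin d → Type*}
    [∀ j : Fin d, Fintype (n j.succ)] {V : ∀ j, Submodule R (n j → R)} {X : (∀ j, n j) → R}
    (hX : HasFibersIn V X) (U : ∀ j, Matrix (m j) (n j.succ) R) (k : ∀ j, m j) :
    (fun a => modeProd U (fun g => X (Fin.cons a g)) k) ∈ V 0 := by
  have sum_fibers_mem :
      ∑ g : ∀ j : Fin d, n j.succ, (∏ j, U j (k j) (g j)) • (fun a => X (Fin.cons a g)) ∈ V 0 :=
    sum_mem fun g _ => (V 0).smul_mem _ (hX.cons_left_mem g)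
  convert sum_fibers_mem using 1
  ext a
  simp [modeProd]

theorem tensor_injectivity_general {n m : Fin d → Type*} [∀ j, Fintype (n j)]
    {V : ∀ j, Submodule R (n j → R)} {U : ∀ j, Matrix (m j) (n j) R}
    (hU : ∀ j, ∀ v ∈ V j, U j *ᵥ v = 0 → v = 0) {X : (∀ j, n j) → R}
    (hX : HasFibersIn V X) (hzero : modeProd U X = 0) :
    X = 0 := by
  induction d with
  | zero =>
    funext g
    rw [← modeProd_fin_zero U X finZeroElim g, hzero, Pi.zero_apply, Pi.zero_apply]
  | succ d ih =>
    have slice_product_eq_zero (k : ∀ j : Fin d, m j.succ) :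
        (fun a => modeProd (fun j => U j.succ) (fun g => X (Fin.cons a g)) k) = 0 := by
      refine hU 0 _ (hX.modeProd_slice_mem (fun j => U j.succ) k) (funext fun i => ?_)
      rw [← modeProd_cons, hzero, Pi.zero_apply, Pi.zero_apply]
    have slice_eq_zero (a : n 0) : (fun g => X (Fin.cons a g)) = 0 :=
      ih (fun j => hU j.succ) (hX.slice a) (funext fun k => congrFun (slice_product_eq_zero k) a)
    funext g
    rw [← Fin.cons_self_tail g]
    exact congrFun (slice_eq_zero (g 0)) (Fin.tail g)

end ModeProduct

theorem NSP.mulVec_ne_zero {m n s : ℕ} {A : Matrix (Fin m) (Fin n) ℝ} (hA : NSP s A) (hs : s ≤ n)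
    {v : Fin n → ℝ} (hv : SparseVec s v) (hne : v ≠ 0) : A.mulVec v ≠ 0 := by
  intro hAv
  obtain ⟨S, hS, -, hcard⟩ := Finset.exists_subsuperset_card_eq
    (Finset.subset_univ (Finset.univ.filter fun i => v i ≠ 0)) hv (by simpa using hs)
  have sum_compl_eq_zero : ∑ i ∈ Sᶜ, |v i| = 0 := by
    refine Finset.sum_eq_zero fun i hi => abs_eq_zero.2 (by_contra fun hvi => ?_)
    exact Finset.mem_compl.1 hi (hS (by simpa using hvi))
  have sum_nonneg : 0 ≤ ∑ i ∈ S, |v i| := Finset.sum_nonneg fun i _ => abs_nonneg (v i)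
  exact (hA v hAv hne S hcard).not_ge (sum_compl_eq_zero.trans_le sum_nonneg)

/-- Tensor injectivity lemma: if every nonzero vector of each subspace `V j ⊆ ℝ^{N j}`
is `s`-sparse, each `U j` satisfies NSP of order `s`, the mode-`j` fibers of `W` all
lie in `V j` (i.e. `W ∈ V 1 ∘ … ∘ V d`), and `W ×₁ U 1 ⋯ ×_d U d = 0`, then `W = 0`. -/
theorem tensor_injectivity {d : ℕ} {N M : Fin d → ℕ} {s : ℕ}
    (hs : ∀ j, s ≤ N j)
    (V : ∀ j, Submodule ℝ (Fin (N j) → ℝ))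
    (hV : ∀ j, ∀ v ∈ V j, v ≠ 0 → SparseVec s v)
    (U : ∀ j, Matrix (Fin (M j)) (Fin (N j)) ℝ)
    (hU : ∀ j, NSP s (U j))
    (W : (∀ j, Fin (N j)) → ℝ)
    (hW : ∀ j, ∀ g : ∀ l, Fin (N l), (fun a => W (Function.update g j a)) ∈ V j)
    (hzero : modeProdAll U W = 0) :
    W = 0 := by
  refine tensor_injectivity_general (fun j v hv => ?_) hW hzero
  exact not_imp_not.1 fun hne => (hU j).mulVec_ne_zero (hs j) (hV j v hv hne) hne
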